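/- arXiv:math/9912170 — 2 statements merged into one kernel-verified Lean document; each statement's English description precedes it below -/
import Mathlib

section
/- For every complex number s, the integral ∫₀^∞ y^{s−1} H(y) dy converges absolutely and equals 2ξ(s), where ξ is the unique entire function satisfying ξ(s) = (1/2) s(s−1) π^{−s/2} Γ(s/2) ζ(s) for Re(s) > 1. -/
open MeasureTheory

/-- `H(y) = 4y² ∑_{n=1}^∞ (2π²n⁴y² − 3πn²) exp(−πn²y²)`. -/
noncomputable def H (y : ℝ) : ℝ :=
  4 * y ^ 2 * ∑' n : ℕ,
    (2 * Real.pi ^ 2 * ((n : ℝ) + 1) ^ 4 * y ^ 2 - 3 * Real.pi * ((n : ℝ) + 1) ^ 2) *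
      Real.exp (-Real.pi * ((n : ℝ) + 1) ^ 2 * y ^ 2)

/-- `S k t = ∑ n^{2k} exp(-π n² t)`. -/
noncomputable def S (k : ℕ) (t : ℝ) : ℝ :=
  ∑' n : ℕ, ((n : ℝ) + 1) ^ (2 * k) * Real.exp (-Real.pi * ((n : ℝ) + 1) ^ 2 * t)

lemma S_summable (k : ℕ) {t : ℝ} (ht : 0 < t) :
    Summable fun n : ℕ => ((n : ℝ) + 1) ^ (2 * k) * Real.exp (-Real.pi * ((n : ℝ) + 1) ^ 2 * t) := by
  have h := (summable_nat_add_iff 1).2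
    (Real.summable_pow_mul_exp_neg_nat_mul (2 * k) (r := Real.pi * t) (by positivity))
  refine Summable.of_nonneg_of_le (fun n => by positivity) (fun n => ?_) h
  push_cast
  refine mul_le_mul_of_nonneg_left (Real.exp_le_exp.2 ?_) (by positivity)
  have : (n : ℝ) + 1 ≤ ((n : ℝ) + 1) ^ 2 := by
    have : (0 : ℝ) ≤ n := n.cast_nonneg
    nlinarith
  have h2 : 0 < Real.pi * t := by positivity
  nlinarith

lemma S_hasSum (k : ℕ) {t : ℝ} (ht : 0 < t) :
    HasSum (fun n : ℕ => ((n : ℝ) + 1) ^ (2 * k) * Real.exp (-Real.pi * ((n : ℝ) + 1) ^ 2 * t))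
      (S k t) := (S_summable k ht).hasSum

lemma S_nonneg (k : ℕ) (t : ℝ) : 0 ≤ S k t := tsum_nonneg fun n => by positivity

lemma S_hasDerivAt (k : ℕ) {t : ℝ} (ht : 0 < t) :
    HasDerivAt (S k) (-Real.pi * S (k + 1) t) t := by
  have h2 : 0 < t / 2 := by positivity
  have := hasDerivAt_tsum_of_isPreconnected (t := Set.Ioi (t / 2)) (y₀ := t) (y := t)
    (g := fun (n : ℕ) (t : ℝ) =>
      ((n : ℝ) + 1) ^ (2 * k) * Real.exp (-Real.pi * ((n : ℝ) + 1) ^ 2 * t))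
    (g' := fun (n : ℕ) (t : ℝ) => -Real.pi *
      (((n : ℝ) + 1) ^ (2 * (k + 1)) * Real.exp (-Real.pi * ((n : ℝ) + 1) ^ 2 * t)))
    ((S_summable (k + 1) h2).mul_left Real.pi) isOpen_Ioi isPreconnected_Ioi
    (fun n y _ => ?_) (fun n y hy => ?_) (by simp; linarith) (S_summable k ht) (by simp; linarith)
  · rw [tsum_mul_left] at this
    exact this
  · have h := (((hasDerivAt_id y).const_mul (-Real.pi * ((n : ℝ) + 1) ^ 2)).exp).const_mul
      (((n : ℝ) + 1) ^ (2 * k))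
    refine h.congr_deriv ?_
    simp only [id]
    ring
  · rw [norm_mul, norm_neg, Real.norm_of_nonneg Real.pi_pos.le, Real.norm_of_nonneg (by positivity)]
    gcongr ?_ * (?_ * Real.exp ?_)
    have : t / 2 < y := hy
    have h3 : 0 < Real.pi * ((n : ℝ) + 1) ^ 2 := by positivity
    nlinarith

lemma S_le (k : ℕ) {t : ℝ} (ht : 1 ≤ t) : S k t ≤ Real.exp (-Real.pi * (t - 1)) * S k 1 := by
  refine hasSum_le (fun n => ?_) (S_hasSum k (by linarith))
    ((S_hasSum k one_pos).mul_left (Real.exp (-Real.pi * (t - 1))))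
  rw [mul_left_comm, ← Real.exp_add]
  gcongr
  have h1 : (1 : ℝ) ≤ ((n : ℝ) + 1) ^ 2 := by
    have : (0 : ℝ) ≤ n := n.cast_nonneg
    nlinarith
  nlinarith [mul_nonneg (mul_nonneg Real.pi_pos.le (sub_nonneg.2 h1)) (sub_nonneg.2 ht)]

lemma theta_fe {y : ℝ} (hy : 0 < y) : 1 + 2 * S 0 ((y⁻¹) ^ 2) = y * (1 + 2 * S 0 (y ^ 2)) := by
  have key : ∀ t : ℝ, 0 < t → HurwitzZeta.cosKernel 0 t = 1 + 2 * S 0 t := by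
    intro t ht
    have h1 := HurwitzZeta.hasSum_nat_cosKernel₀ 0 ht
    have h2 := (S_hasSum 0 ht).mul_left 2
    have := h1.unique (by simpa using h2)
    simp only [QuotientAddGroup.mk_zero] at this
    linarith
  have h := HurwitzZeta.evenKernel_functional_equation 0 (y⁻¹ ^ 2)
  rw [HurwitzZeta.evenKernel_eq_cosKernel_of_zero, key _ (by positivity), key _ (by positivity)] at h
  rw [h, ← Real.sqrt_eq_rpow, Real.sqrt_sq (by positivity)]
  simp

lemma H_eq {y : ℝ} (hy : 0 < y) :
    H y = 8 * Real.pi ^ 2 * y ^ 4 * S 2 (y ^ 2) - 12 * Real.pi * y ^ 2 * S 1 (y ^ 2) := by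
  have h2 : 0 < y ^ 2 := by positivity
  have := ((S_hasSum 2 h2).mul_left (2 * Real.pi ^ 2 * y ^ 2)).sub
    ((S_hasSum 1 h2).mul_left (3 * Real.pi))
  rw [H]
  have h3 := this.tsum_eq
  have : ∀ a b : ℝ, a = b → 4 * y ^ 2 * a = 4 * y ^ 2 * b := fun a b h => by rw [h]
  rw [this _ _ ((tsum_congr fun n => ?_).trans h3)]
  · ring
  · ring

lemma theta_fe1 {y : ℝ} (hy : 0 < y) :
    4 * Real.pi * S 1 ((y⁻¹) ^ 2) * (y⁻¹) ^ 3 =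
      1 + 2 * S 0 (y ^ 2) - 4 * Real.pi * y ^ 2 * S 1 (y ^ 2) := by
  have e : (fun y => 1 + 2 * S 0 ((y⁻¹) ^ 2)) =ᶠ[nhds y] fun y => y * (1 + 2 * S 0 (y ^ 2)) := by
    filter_upwards [lt_mem_nhds hy] with z hz using theta_fe hz
  have hp := (hasDerivAt_id y).pow 2
  have hi := (hasDerivAt_inv hy.ne').pow 2
  have d1 := (((S_hasDerivAt 0 (t := (y⁻¹) ^ 2) (by positivity)).comp y hi).const_mul 2).const_add 1
  have d2 := (hasDerivAt_id y).mul
    ((((S_hasDerivAt 0 (t := y ^ 2) (by positivity)).comp y hp).const_mul 2).const_add 1)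
  have := (d1.congr_of_eventuallyEq e.symm).unique d2
  simp at this
  field_simp at this ⊢
  linarith

lemma H_fe {y : ℝ} (hy : 0 < y) : H y⁻¹ = y * H y := by
  have e : (fun y => 4 * Real.pi * S 1 ((y⁻¹) ^ 2) * (y⁻¹) ^ 3) =ᶠ[nhds y]
      fun y => 1 + 2 * S 0 (y ^ 2) - 4 * Real.pi * y ^ 2 * S 1 (y ^ 2) := by
    filter_upwards [lt_mem_nhds hy] with z hz using theta_fe1 hz
  have hp := (hasDerivAt_id y).pow 2
  have hi := (hasDerivAt_inv hy.ne').pow 2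
  have hi3 := (hasDerivAt_inv hy.ne').pow 3
  have d1 := (((S_hasDerivAt 1 (t := (y⁻¹) ^ 2) (by positivity)).comp y hi).const_mul
    (4 * Real.pi)).mul hi3
  have d2 := ((((S_hasDerivAt 0 (t := y ^ 2) (by positivity)).comp y hp).const_mul 2).const_add
    1).sub ((hp.const_mul (4 * Real.pi)).mul ((S_hasDerivAt 1 (t := y ^ 2) (by positivity)).comp y hp))
  have := (d1.congr_of_eventuallyEq e.symm).unique d2
  rw [H_eq hy, H_eq (inv_pos.2 hy)]
  simp at this
  field_simp at this ⊢
  linarith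

open Filter Asymptotics Topology in
lemma H_isBigO_top (r : ℝ) : (fun y => (H y : ℂ)) =O[atTop] fun y : ℝ => y ^ r := by
  have h1 : (fun y => (H y : ℂ)) =O[atTop] fun y : ℝ => y ^ (4 : ℝ) * Real.exp (-Real.pi * y) := by
    refine IsBigO.of_bound ((8 * Real.pi ^ 2 * S 2 1 + 12 * Real.pi * S 1 1) * Real.exp Real.pi) ?_
    filter_upwards [eventually_ge_atTop 1] with y hy
    have hy0 : 0 < y := by linarith
    have hy2 : 1 ≤ y ^ 2 := by nlinarith
    have hexp : Real.exp (-Real.pi * (y ^ 2 - 1)) ≤ Real.exp Real.pi * Real.exp (-Real.pi * y) := by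
      rw [← Real.exp_add, Real.exp_le_exp]
      nlinarith [Real.pi_pos, mul_nonneg Real.pi_pos.le (mul_nonneg hy0.le (sub_nonneg.2 hy))]
    have b2 : S 2 (y ^ 2) ≤ Real.exp Real.pi * Real.exp (-Real.pi * y) * S 2 1 :=
      (S_le 2 hy2).trans (mul_le_mul_of_nonneg_right hexp (S_nonneg _ _))
    have b1 : S 1 (y ^ 2) ≤ Real.exp Real.pi * Real.exp (-Real.pi * y) * S 1 1 :=
      (S_le 1 hy2).trans (mul_le_mul_of_nonneg_right hexp (S_nonneg _ _))
    have hy4 : y ^ 2 ≤ y ^ 4 := by nlinarith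
    have n1 := S_nonneg 1 (y ^ 2)
    have n2 := S_nonneg 2 (y ^ 2)
    rw [Complex.norm_real, H_eq hy0]
    have e4 : y ^ (4 : ℝ) = y ^ 4 := by
      rw [← Real.rpow_natCast]; norm_num
    rw [e4, Real.norm_of_nonneg (r := y ^ 4 * _) (by positivity)]
    refine (norm_sub_le _ _).trans ?_
    rw [Real.norm_of_nonneg (by positivity), Real.norm_of_nonneg (by positivity)]
    calc 8 * Real.pi ^ 2 * y ^ 4 * S 2 (y ^ 2) + 12 * Real.pi * y ^ 2 * S 1 (y ^ 2)
        ≤ 8 * Real.pi ^ 2 * y ^ 4 * (Real.exp Real.pi * Real.exp (-Real.pi * y) * S 2 1)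
          + 12 * Real.pi * y ^ 4 * (Real.exp Real.pi * Real.exp (-Real.pi * y) * S 1 1) := by
          gcongr
      _ = _ := by ring
  refine h1.trans ?_
  have h2 := (isLittleO_exp_neg_mul_rpow_atTop Real.pi_pos (r - 4)).isBigO
  refine ((isBigO_refl (fun y : ℝ => y ^ (4 : ℝ)) atTop).mul h2).congr' EventuallyEq.rfl ?_
  filter_upwards [eventually_gt_atTop 0] with y hy
  rw [← Real.rpow_add hy]
  ring_nf

open Filter Asymptotics Topology in
lemma H_isBigO_zero (r : ℝ) : (fun y => (H y : ℂ)) =O[𝓝[>] 0] fun y : ℝ => y ^ r := by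
  have h := (H_isBigO_top (-r - 1)).comp_tendsto tendsto_inv_nhdsGT_zero
  have h3 : (fun y : ℝ => ((y⁻¹ : ℝ) : ℂ)) =O[𝓝[>] 0] fun y : ℝ => y⁻¹ :=
    IsBigO.of_bound 1 (Eventually.of_forall fun y => by simp)
  refine (h3.mul h).congr' ?_ ?_
  · filter_upwards [self_mem_nhdsWithin] with y hy
    have := H_fe (inv_pos.2 (show 0 < y from hy))
    rw [inv_inv] at this
    rw [this]
    push_cast
    rfl
  · filter_upwards [self_mem_nhdsWithin] with y hy
    have hy : 0 < y := hy
    simp only [Function.comp]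
    rw [Real.inv_rpow hy.le, ← Real.rpow_neg hy.le, ← Real.rpow_neg_one, ← Real.rpow_add hy]
    ring_nf

lemma H_locInt : LocallyIntegrableOn (fun y => (H y : ℂ)) (Set.Ioi 0) := by
  refine ContinuousOn.locallyIntegrableOn ?_ measurableSet_Ioi
  refine Complex.continuous_ofReal.comp_continuousOn ?_
  refine ContinuousOn.congr (f := fun y =>
    8 * Real.pi ^ 2 * y ^ 4 * S 2 (y ^ 2) - 12 * Real.pi * y ^ 2 * S 1 (y ^ 2)) ?_
    (fun y hy => H_eq hy)
  intro y hy
  have h : ∀ k, ContinuousAt (fun y => S k (y ^ 2)) y := fun k =>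
    ContinuousAt.comp (f := fun y : ℝ => y ^ 2)
      (S_hasDerivAt k (pow_pos (show 0 < y from hy) 2)).continuousAt (by fun_prop)
  have h1 := h 1
  have h2 := h 2
  exact ContinuousAt.continuousWithinAt (by fun_prop)

lemma H_mellinConvergent (s : ℂ) : MellinConvergent (fun y => (H y : ℂ)) s :=
  mellinConvergent_of_isBigO_rpow (a := s.re + 1) (b := s.re - 1) H_locInt (H_isBigO_top _)
    (by linarith) (H_isBigO_zero _) (by linarith)

lemma H_mellin_differentiable : Differentiable ℂ (mellin (fun y => (H y : ℂ))) := fun s =>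
  mellin_differentiableAt_of_isBigO_rpow (a := s.re + 1) (b := s.re - 1) H_locInt (H_isBigO_top _)
    (by linarith) (H_isBigO_zero _) (by linarith)

lemma S_mellin (k : ℕ) {w : ℂ} (hw : 1 / 2 < w.re) :
    mellin (fun t => (S k t : ℂ)) (w + k) =
      (Real.pi : ℂ) ^ (-(w + k)) * Complex.Gamma (w + k) * riemannZeta (2 * w) := by
  have hre : (w + k).re = w.re + k := by simp
  have hk : (0 : ℝ) ≤ k := k.cast_nonneg
  have h := hasSum_mellin_pi_mul (ι := ℕ) (a := fun n => ((n : ℂ) + 1) ^ (2 * k))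
    (q := fun n => ((n : ℝ) + 1) ^ 2) (F := fun t => (S k t : ℂ)) (s := w + k)
    (fun n => Or.inr (by positivity)) (by rw [hre]; linarith) (fun t ht => ?_) ?_
  · rw [← h.tsum_eq, zeta_eq_tsum_one_div_nat_add_one_cpow (by simp; linarith), ← tsum_mul_left]
    refine tsum_congr fun n => ?_
    rw [mul_div_assoc]
    congr 1
    have hn : (n : ℂ) + 1 ≠ 0 := by exact_mod_cast n.succ_ne_zero
    have : ((((n : ℝ) + 1) ^ 2 : ℝ) : ℂ) ^ (w + k) = ((n : ℂ) + 1) ^ (2 * w) * ((n : ℂ) + 1) ^ (2 * k) := by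
      have h0 : (((n : ℝ) + 1 : ℝ) : ℂ) = (n : ℂ) + 1 := by push_cast; rfl
      rw [Complex.ofReal_pow, pow_two, Complex.mul_cpow_ofReal_nonneg (by positivity) (by positivity),
        h0, ← Complex.cpow_add _ _ hn, ← Complex.cpow_natCast, ← Complex.cpow_add _ _ hn]
      congr 1
      push_cast
      ring
    rw [this]
    field_simp
  · have := Complex.hasSum_ofReal.2 (S_hasSum k (show 0 < t from ht))
    convert this using 2 with n
    push_cast
    rfl
  · have h1 : Summable fun n : ℕ => 1 / ((n : ℝ) + 1) ^ (2 * w.re) := by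
      have := (summable_nat_add_iff 1).2 (Real.summable_one_div_nat_rpow (p := 2 * w.re) |>.2 (by linarith))
      simpa using this
    refine h1.congr fun n => ?_
    have hn : (0 : ℝ) < n + 1 := by positivity
    have e1 : ‖((n : ℂ) + 1) ^ (2 * k)‖ = ((n : ℝ) + 1) ^ (2 * k) := by
      rw [norm_pow]
      congr 1
      have : (n : ℂ) + 1 = ((n + 1 : ℝ) : ℂ) := by push_cast; rfl
      rw [this, Complex.norm_real, Real.norm_of_nonneg hn.le]
    have e2 : (((n : ℝ) + 1) ^ 2) ^ (w + k).re = ((n : ℝ) + 1) ^ (2 * w.re) * ((n : ℝ) + 1) ^ (2 * k) := by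
      rw [hre, ← Real.rpow_natCast, ← Real.rpow_natCast, ← Real.rpow_mul hn.le, ← Real.rpow_add hn]
      congr 1
      push_cast
      ring
    rw [e1, e2]
    field_simp

lemma S_mellinConvergent (k : ℕ) {w : ℂ} (hw : 1 / 2 < w.re) :
    MellinConvergent (fun t => (S k t : ℂ)) (w + k) := by
  by_contra h
  have h0 : mellin (fun t => (S k t : ℂ)) (w + k) = 0 := integral_undef h
  rw [S_mellin k hw] at h0
  have hk : (0 : ℝ) ≤ k := k.cast_nonneg
  refine mul_ne_zero (mul_ne_zero ?_ ?_) ?_ h0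
  · rw [Ne, Complex.cpow_eq_zero_iff]
    simp [Real.pi_ne_zero]
  · exact Complex.Gamma_ne_zero_of_re_pos (by simp; linarith)
  · exact riemannZeta_ne_zero_of_one_lt_re (by simp; linarith)

lemma H_mellin {s : ℂ} (hs : 1 < s.re) : mellin (fun y => (H y : ℂ)) s =
    2 * ((1 / 2) * s * (s - 1) * (Real.pi : ℂ) ^ (-s / 2) * Complex.Gamma (s / 2) *
        riemannZeta s) := by
  have hw : 1 / 2 < (s / 2).re := by simp; linarith
  set h : ℝ → ℂ := fun t => (8 * (Real.pi : ℂ) ^ 2) • ((t : ℂ) ^ (2 : ℂ) • (S 2 t : ℂ)) -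
    (12 * (Real.pi : ℂ)) • ((t : ℂ) ^ (1 : ℂ) • (S 1 t : ℂ)) with hh
  have e1 : mellin (fun y => (H y : ℂ)) s = mellin (fun y : ℝ => h (y ^ (2 : ℝ))) s := by
    refine setIntegral_congr_fun measurableSet_Ioi fun y hy => ?_
    have hy : 0 < y := hy
    simp only [hh]
    rw [H_eq hy]
    congr 1
    rw [Real.rpow_two, Complex.cpow_one, Complex.cpow_ofNat]
    simp only [smul_eq_mul]
    push_cast
    ring
  have c2 : MellinConvergent (fun t : ℝ => (t : ℂ) ^ (2 : ℂ) • (S 2 t : ℂ)) (s / 2) :=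
    MellinConvergent.cpow_smul.2 (by simpa using S_mellinConvergent 2 hw)
  have c1 : MellinConvergent (fun t : ℝ => (t : ℂ) ^ (1 : ℂ) • (S 1 t : ℂ)) (s / 2) :=
    MellinConvergent.cpow_smul.2 (by simpa using S_mellinConvergent 1 hw)
  have m2 := S_mellin 2 hw
  have m1 := S_mellin 1 hw
  push_cast at m1 m2
  have hpi : (Real.pi : ℂ) ≠ 0 := by exact_mod_cast Real.pi_ne_zero
  have hw0 : s / 2 ≠ 0 := by
    intro h
    rw [h] at hw
    norm_num at hw
  have hw1 : s / 2 + 1 ≠ 0 := by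
    intro h
    have := congrArg Complex.re h
    rw [Complex.add_re] at this
    simp only [Complex.one_re, Complex.zero_re] at this
    linarith
  have g2 : Complex.Gamma (s / 2 + 2) = (s / 2 + 1) * (s / 2 * Complex.Gamma (s / 2)) := by
    rw [← Complex.Gamma_add_one _ hw0, ← Complex.Gamma_add_one _ hw1]
    ring_nf
  rw [e1, mellin_comp_rpow, hh]
  push_cast
  rw [(hasMellin_sub (c2.const_smul (8 * (Real.pi : ℂ) ^ 2)) (c1.const_smul (12 * (Real.pi : ℂ)))).2,
    mellin_const_smul, mellin_const_smul, mellin_cpow_smul, mellin_cpow_smul, m1, m2, g2,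
    Complex.Gamma_add_one _ hw0, neg_add, neg_add, Complex.cpow_add _ _ hpi,
    Complex.cpow_add _ _ hpi, Complex.cpow_neg _ (1 : ℂ), Complex.cpow_neg _ (2 : ℂ),
    Complex.cpow_one, Complex.cpow_ofNat, mul_div_cancel₀ _ (two_ne_zero), ← neg_div]
  simp only [smul_eq_mul, Complex.real_smul]
  rw [abs_of_pos two_pos]
  push_cast
  field_simp
  ring

/-- For every complex `s`, `∫₀^∞ y^{s−1} H(y) dy` converges absolutely and equals
`2ξ(s)`, where `ξ` is the unique entire function with
`ξ(s) = (1/2) s(s−1) π^{−s/2} Γ(s/2) ζ(s)` for `Re(s) > 1`. -/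
theorem mellin_H_eq_two_xi (ξ : ℂ → ℂ) (hξ : Differentiable ℂ ξ)
    (hξ_eq : ∀ s : ℂ, 1 < s.re →
      ξ s = (1 / 2) * s * (s - 1) * (Real.pi : ℂ) ^ (-s / 2) * Complex.Gamma (s / 2) *
        riemannZeta s)
    (s : ℂ) :
    IntegrableOn (fun y : ℝ => (y : ℂ) ^ (s - 1) * (H y : ℂ)) (Set.Ioi 0) ∧
    ∫ y in Set.Ioi (0 : ℝ), (y : ℂ) ^ (s - 1) * (H y : ℂ) = 2 * ξ s := by
  refine ⟨H_mellinConvergent s, ?_⟩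
  have h1 : AnalyticOnNhd ℂ (mellin (fun y => (H y : ℂ))) Set.univ := fun z _ =>
    H_mellin_differentiable.analyticAt z
  have h2 : AnalyticOnNhd ℂ (fun s => 2 * ξ s) Set.univ := fun z _ =>
    (hξ.const_mul 2).analyticAt z
  have h3 : mellin (fun y => (H y : ℂ)) =ᶠ[nhds 2] fun s => 2 * ξ s := by
    have ho : IsOpen {z : ℂ | 1 < z.re} := isOpen_lt continuous_const Complex.continuous_re
    filter_upwards [ho.mem_nhds (show (1 : ℝ) < (2 : ℂ).re by norm_num)] with z hz
    rw [H_mellin hz, hξ_eq z hz]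
  exact congrFun (h1.eq_of_eventuallyEq h2 h3) s
end

section
/- For every complex number z: sinh z = z · ∏_{n=1}^∞ (1 + z²/(n²π²)) and cosh z = ∏_{n=1}^∞ (1 + z²/((n − 1/2)²π²)), both infinite products converging. -/
open Filter Topology in
lemma ep_summable (a : ℝ) (z : ℂ) :
    Summable fun n : ℕ => z ^ 2 / (((n : ℂ) + a) ^ 2 * (Real.pi : ℂ) ^ 2) := by
  have h := ((Real.summable_one_div_nat_add_rpow a 2).2 (by norm_num)).mul_left
    (‖z‖ ^ 2 / Real.pi ^ 2)
  refine Summable.of_norm (h.congr fun n => ?_)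
  have e : ‖(n : ℂ) + a‖ = |(n : ℝ) + a| := by
    rw [← Real.norm_eq_abs, ← Complex.norm_real]; push_cast; rfl
  have e2 : ‖(Real.pi : ℂ)‖ = Real.pi := by
    rw [Complex.norm_real]; exact abs_of_pos Real.pi_pos
  rw [norm_div, norm_mul, norm_pow, norm_pow, norm_pow, e, e2]
  rw [show (2 : ℝ) = ((2 : ℕ) : ℝ) by norm_num, Real.rpow_natCast]
  rw [div_mul_div_comm, mul_one, mul_comm (Real.pi ^ 2)]

lemma ep_mult1 (z : ℂ) :
    Multipliable fun n : ℕ => 1 + z ^ 2 / (((n : ℂ) + 1) ^ 2 * (Real.pi : ℂ) ^ 2) := by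
  have h := Complex.multipliable_one_add_of_summable (ep_summable 1 z)
  simpa using h

lemma ep_half (n : ℕ) : ((n : ℂ) + 1) - 1 / 2 = (n : ℂ) + ((1 / 2 : ℝ) : ℂ) := by
  push_cast; ring

lemma ep_mult2 (z : ℂ) :
    Multipliable fun n : ℕ =>
      1 + z ^ 2 / ((((n : ℂ) + 1) - 1 / 2) ^ 2 * (Real.pi : ℂ) ^ 2) := by
  simp only [ep_half]
  exact Complex.multipliable_one_add_of_summable (ep_summable (1 / 2) z)

lemma ep_sinh (z : ℂ) :
    Complex.sinh z = z * ∏' n : ℕ, (1 + z ^ 2 / (((n : ℂ) + 1) ^ 2 * (Real.pi : ℂ) ^ 2)) := by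
  have hpi : (Real.pi : ℂ) ≠ 0 := by exact_mod_cast Real.pi_ne_zero
  have h1 := ((ep_mult1 z).hasProd.tendsto_prod_nat).const_mul (z * Complex.I)
  have h2 := Complex.tendsto_euler_sin_prod (z * Complex.I / Real.pi)
  have e : (Real.pi : ℂ) * (z * Complex.I / Real.pi) = z * Complex.I := by
    field_simp
  rw [e, Complex.sin_mul_I] at h2
  have h3 := tendsto_nhds_unique h1 (h2.congr fun n => by
    congr 1
    refine Finset.prod_congr rfl fun j _ => ?_
    rw [div_pow, mul_pow, Complex.I_sq, div_div, mul_comm ((Real.pi : ℂ) ^ 2)]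
    ring)
  apply mul_right_cancel₀ Complex.I_ne_zero
  rw [← h3]; ring

lemma ep_mul (z : ℂ) : Complex.sinh z * Complex.cosh z = Complex.sinh z *
    ∏' n : ℕ, (1 + z ^ 2 / ((((n : ℂ) + 1) - 1 / 2) ^ 2 * (Real.pi : ℂ) ^ 2)) := by
  have hpi : (Real.pi : ℂ) ≠ 0 := by exact_mod_cast Real.pi_ne_zero
  have h := ep_sinh (2 * z)
  have he : ∀ k : ℕ, 1 + (2 * z) ^ 2 / ((((2 * k : ℕ) : ℂ) + 1) ^ 2 * (Real.pi : ℂ) ^ 2) =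
      1 + z ^ 2 / ((((k : ℂ) + 1) - 1 / 2) ^ 2 * (Real.pi : ℂ) ^ 2) := fun k => by
    rw [show (((2 * k : ℕ) : ℂ) + 1) = 2 * (((k : ℂ) + 1) - 1 / 2) by push_cast; ring,
      mul_pow, mul_pow, mul_assoc, mul_div_mul_left _ _ (by norm_num)]
  have ho : ∀ k : ℕ, 1 + (2 * z) ^ 2 / ((((2 * k + 1 : ℕ) : ℂ) + 1) ^ 2 * (Real.pi : ℂ) ^ 2) =
      1 + z ^ 2 / (((k : ℂ) + 1) ^ 2 * (Real.pi : ℂ) ^ 2) := fun k => by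
    rw [show (((2 * k + 1 : ℕ) : ℂ) + 1) = 2 * ((k : ℂ) + 1) by push_cast; ring,
      mul_pow, mul_pow, mul_assoc, mul_div_mul_left _ _ (by norm_num)]
  rw [← tprod_even_mul_odd
    (f := fun n : ℕ => 1 + (2 * z) ^ 2 / (((n : ℂ) + 1) ^ 2 * (Real.pi : ℂ) ^ 2))
    ((ep_mult2 z).congr fun k => (he k).symm) ((ep_mult1 z).congr fun k => (ho k).symm),
    tprod_congr he, tprod_congr ho, Complex.sinh_two_mul] at h
  have h2 := ep_sinh z
  apply mul_left_cancel₀ (two_ne_zero : (2 : ℂ) ≠ 0)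
  rw [← mul_assoc, h]
  rw [h2]
  ring

open Filter Topology in
lemma ep_cont : Continuous fun z : ℂ =>
    ∏' n : ℕ, (1 + z ^ 2 / ((((n : ℂ) + 1) - 1 / 2) ^ 2 * (Real.pi : ℂ) ^ 2)) := by
  rw [continuous_iff_continuousAt]
  intro z
  have hb : ∀ n : ℕ, ∀ x ∈ Metric.closedBall (0 : ℂ) (‖z‖ + 1),
      ‖x ^ 2 / ((((n : ℂ) + 1) - 1 / 2) ^ 2 * (Real.pi : ℂ) ^ 2)‖ ≤
      ‖((‖z‖ + 1 : ℝ) : ℂ) ^ 2 / ((((n : ℂ) + 1) - 1 / 2) ^ 2 * (Real.pi : ℂ) ^ 2)‖ := by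
    intro n x hx
    rw [norm_div, norm_div, norm_pow, norm_pow, Complex.norm_real, Real.norm_eq_abs,
      abs_of_nonneg (by positivity : 0 ≤ ‖z‖ + 1)]
    have : ‖x‖ ≤ ‖z‖ + 1 := by simpa using hx
    gcongr
  have hs : Summable fun n : ℕ =>
      ‖((‖z‖ + 1 : ℝ) : ℂ) ^ 2 / ((((n : ℂ) + 1) - 1 / 2) ^ 2 * (Real.pi : ℂ) ^ 2)‖ := by
    simp only [ep_half]
    exact (ep_summable (1 / 2) _).norm
  have hu := (hs.hasProdUniformlyOn_nat_one_add
    (isCompact_closedBall (0 : ℂ) (‖z‖ + 1)) (Eventually.of_forall hb)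
    (fun n => by fun_prop)).tendstoUniformlyOn_finsetRange
  have hc := hu.continuousOn (Frequently.of_forall fun n => by fun_prop)
  refine hc.continuousAt (mem_of_superset (Metric.isOpen_ball.mem_nhds ?_)
    Metric.ball_subset_closedBall)
  simp

open Filter Topology in
lemma ep_cosh (z : ℂ) : Complex.cosh z
      = ∏' n : ℕ, (1 + z ^ 2 / ((((n : ℂ) + 1) - 1 / 2) ^ 2 * (Real.pi : ℂ) ^ 2)) := by
  by_cases hz : Complex.sinh z = 0
  · have hc : Complex.cosh z ≠ 0 := by
      intro h
      have := Complex.cosh_sq z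
      rw [h, hz] at this
      norm_num at this
    have hne := (Complex.hasDerivAt_sinh z).eventually_ne (c := 0) hc
    have h1 := (Complex.continuous_cosh.tendsto z).mono_left (nhdsWithin_le_nhds (s := {z}ᶜ))
    have h2 := (ep_cont.tendsto z).mono_left (nhdsWithin_le_nhds (s := {z}ᶜ))
    refine tendsto_nhds_unique (h1.congr' ?_) h2
    filter_upwards [hne] with w hw
    exact mul_left_cancel₀ hw (ep_mul w)
  · exact mul_left_cancel₀ hz (ep_mul z)

/-- Euler's product formulae:
`sinh z = z ∏_{n=1}^∞ (1 + z²/(n²π²))` and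
`cosh z = ∏_{n=1}^∞ (1 + z²/((n − 1/2)²π²))`, both products converging. -/
theorem euler_products (z : ℂ) :
    (Multipliable fun n : ℕ => 1 + z ^ 2 / (((n : ℂ) + 1) ^ 2 * (Real.pi : ℂ) ^ 2)) ∧
    Complex.sinh z = z * ∏' n : ℕ, (1 + z ^ 2 / (((n : ℂ) + 1) ^ 2 * (Real.pi : ℂ) ^ 2)) ∧
    (Multipliable fun n : ℕ =>
      1 + z ^ 2 / ((((n : ℂ) + 1) - 1 / 2) ^ 2 * (Real.pi : ℂ) ^ 2)) ∧
    Complex.cosh z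
      = ∏' n : ℕ, (1 + z ^ 2 / ((((n : ℂ) + 1) - 1 / 2) ^ 2 * (Real.pi : ℂ) ^ 2)) := by
  exact ⟨ep_mult1 z, ep_sinh z, ep_mult2 z, ep_cosh z⟩
end
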